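/- arXiv:2511.02954 — 7 statements merged into one kernel-verified Lean document; each statement's English description precedes it below -/
import Mathlib

section
/- For every integer n ≥ 4 and every function d : Fin n → ℕ with ∑_{x} d(x) ≤ (1/4)·n·log₂(log₂ n), there exists an integer i with ⌊(1/2)·log₂(log₂ n)⌋ ≤ i ≤ ⌊log₂(log₂ n)⌋ such that the number of x ∈ Fin n with d(x) ≥ 2^i is strictly less than n/2^i. -/
/-!
Suppose at least `#t / b ^ i` elements reach height `b ^ i`, for every scale `i` of a finite set
`s`. Then `∑ i ∈ s, b ^ i * #{x ∈ t | b ^ i ≤ d x} ≥ #s * #t`. Exchanging the sums, an element `x`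
contributes the powers of `b` below `d x`, a geometric sum of at most `b / (b - 1) * d x`; hence
`#s * #t ≤ b / (b - 1) * ∑ d`. For `b = 2` and the more than `L / 2` scales between `⌊L / 2⌋` and
`⌊L⌋`, this contradicts `∑ d ≤ #t * L / 4`.
-/

open Finset

section PowerScales

variable {α R : Type*} [CommRing R] [LinearOrder R] [IsStrictOrderedRing R] {b : R}

theorem sub_one_mul_sum_pow_le (hb : 1 ≤ b) {s : Finset ℕ} {m : R} (hm : 0 ≤ m)
    (hs : ∀ i ∈ s, b ^ i ≤ m) : (b - 1) * ∑ i ∈ s, b ^ i ≤ b * m := by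
  have hb₀ : 0 ≤ b := zero_le_one.trans hb
  rcases s.eq_empty_or_nonempty with rfl | hne
  · simpa using mul_nonneg hb₀ hm
  have hsub : s ⊆ range (s.max' hne + 1) := fun i hi ↦
    mem_range.2 (Nat.lt_succ_of_le (s.le_max' i hi))
  calc (b - 1) * ∑ i ∈ s, b ^ i
      ≤ (b - 1) * ∑ i ∈ range (s.max' hne + 1), b ^ i :=
        mul_le_mul_of_nonneg_left
          (sum_le_sum_of_subset_of_nonneg hsub fun i _ _ ↦ pow_nonneg hb₀ i)
          (sub_nonneg.2 hb)
    _ = b ^ (s.max' hne + 1) - 1 := mul_geom_sum b _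
    _ ≤ b * b ^ s.max' hne := by rw [pow_succ']; exact sub_le_self _ zero_le_one
    _ ≤ b * m := mul_le_mul_of_nonneg_left (hs _ (s.max'_mem hne)) hb₀

theorem sub_one_mul_sum_pow_mul_card_le (hb : 1 ≤ b) (s : Finset ℕ) {t : Finset α} {d : α → R}
    (hd : ∀ x ∈ t, 0 ≤ d x) :
    (b - 1) * ∑ i ∈ s, b ^ i * #{x ∈ t | b ^ i ≤ d x} ≤ b * ∑ x ∈ t, d x := by
  have hswap : ∑ i ∈ s, b ^ i * #{x ∈ t | b ^ i ≤ d x} =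
      ∑ x ∈ t, ∑ i ∈ s with b ^ i ≤ d x, b ^ i := by
    simp only [card_filter, Nat.cast_sum, Nat.cast_ite, Nat.cast_one, Nat.cast_zero, mul_sum,
      mul_ite, mul_one, mul_zero, sum_filter]
    exact sum_comm
  rw [hswap, mul_sum, mul_sum]
  exact sum_le_sum fun x hx ↦
    sub_one_mul_sum_pow_le hb (hd x hx) fun i hi ↦ (mem_filter.1 hi).2

theorem exists_pow_mul_card_lt (hb : 1 ≤ b) {s : Finset ℕ} {t : Finset α} {d : α → R}
    (hd : ∀ x ∈ t, 0 ≤ d x) (hsum : b * ∑ x ∈ t, d x < (b - 1) * (#s * #t)) :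
    ∃ i ∈ s, b ^ i * #{x ∈ t | b ^ i ≤ d x} < (#t : R) := by
  apply exists_lt_of_sum_lt
  rw [sum_const, nsmul_eq_mul]
  exact lt_of_mul_lt_mul_left ((sub_one_mul_sum_pow_mul_card_le hb s hd).trans_lt hsum)
    (sub_nonneg.2 hb)

variable [FloorSemiring R]

theorem sub_lt_card_Icc_floor {u : R} (hu : 0 ≤ u) (v : R) :
    v - u < #(Icc ⌊u⌋₊ ⌊v⌋₊) := by
  have hcard : (⌊v⌋₊ : R) + 1 ≤ #(Icc ⌊u⌋₊ ⌊v⌋₊) + ⌊u⌋₊ := by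
    rw [Nat.card_Icc]
    exact_mod_cast le_tsub_add
  linarith [Nat.floor_le hu, Nat.lt_floor_add_one v]

theorem exists_mem_Icc_floor_pow_mul_card_lt (hb : 1 < b) {t : Finset α} (ht : t.Nonempty)
    {d : α → R} (hd : ∀ x ∈ t, 0 ≤ d x) {u v : R} (hu : 0 ≤ u)
    (hsum : b * ∑ x ∈ t, d x ≤ (b - 1) * ((v - u) * #t)) :
    ∃ i ∈ Icc ⌊u⌋₊ ⌊v⌋₊, b ^ i * #{x ∈ t | b ^ i ≤ d x} < (#t : R) := by
  have ht₀ : (0 : R) < #t := Nat.cast_pos.2 ht.card_pos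
  exact exists_pow_mul_card_lt hb.le hd <| hsum.trans_lt <|
    mul_lt_mul_of_pos_left (mul_lt_mul_of_pos_right (sub_lt_card_Icc_floor hu v) ht₀)
      (sub_pos.2 hb)

end PowerScales

theorem stmt_0_general {α : Type*} {t : Finset α} (ht : t.Nonempty) {d : α → ℝ}
    (hd : ∀ x ∈ t, 0 ≤ d x) {L : ℝ} (hsum : ∑ x ∈ t, d x ≤ (1 / 4) * #t * L) :
    ∃ i : ℕ, ⌊(1 / 2 : ℝ) * L⌋ ≤ (i : ℤ) ∧ (i : ℤ) ≤ ⌊L⌋ ∧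
      (#{x ∈ t | 2 ^ i ≤ d x} : ℝ) < #t / 2 ^ i := by
  have hcoeff : (0 : ℝ) < 1 / 4 * #t := mul_pos (by norm_num) (Nat.cast_pos.2 ht.card_pos)
  have hL : 0 ≤ L := nonneg_of_mul_nonneg_right ((sum_nonneg hd).trans hsum) hcoeff
  have hL₂ : 0 ≤ 1 / 2 * L := by positivity
  obtain ⟨i, hi, hcard⟩ := exists_mem_Icc_floor_pow_mul_card_lt (b := 2) (v := L) one_lt_two ht hd
    hL₂ (by linarith)
  obtain ⟨hlow, hhigh⟩ := mem_Icc.1 hi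
  rw [← Int.natCast_floor_eq_floor hL, ← Int.natCast_floor_eq_floor hL₂]
  exact ⟨i, mod_cast hlow, mod_cast hhigh, (lt_div_iff₀' (by positivity)).2 hcard⟩

/-- Claim 6 ('few_deep'): if the total depth of `n` elements is at most
`(1/4)·n·log₂ log₂ n`, then some depth scale `2^i` with
`⌊(1/2)·log₂ log₂ n⌋ ≤ i ≤ ⌊log₂ log₂ n⌋` is exceeded by fewer than `n/2^i` elements. -/
theorem stmt_0 (n : ℕ) (hn : 4 ≤ n) (d : Fin n → ℕ)
    (hsum : (∑ x, (d x : ℝ)) ≤ (1 / 4) * n * Real.logb 2 (Real.logb 2 n)) :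
    ∃ i : ℕ,
      ⌊(1 / 2 : ℝ) * Real.logb 2 (Real.logb 2 n)⌋ ≤ (i : ℤ) ∧
      (i : ℤ) ≤ ⌊Real.logb 2 (Real.logb 2 n)⌋ ∧
      ((Finset.univ.filter (fun x => 2 ^ i ≤ d x)).card : ℝ) < (n : ℝ) / 2 ^ i := by
  have : Nonempty (Fin n) := ⟨⟨0, by lia⟩⟩
  simpa [← Nat.cast_le (α := ℝ)] using
    stmt_0_general univ_nonempty (fun x _ ↦ (d x).cast_nonneg) (by simpa using hsum)
end

section
/- Let s₁ ≥ s₂ ≥ … ≥ s_m ≥ 1 be integers with s₁ ≥ 2 and s₁ + … + s_m = n. For an integer L let C(L) = ∑_{j : s_j < L} s_j. Let M = min over integers L with 2 ≤ L ≤ n and C(L) < n of (1/4)·C(L)·max{0, log₂(C(L)/(2L))} (this set of L is nonempty since s₁ ≥ 2). Let p : Fin n → List Bool be any function with ∑_{x} (length of p(x)) ≤ 2·M. Then there exists a partition of Fin n into sets X₁, …, X_m with |X_j| = s_j for every j, such that for every j the set {p(x) : x ∈ X_j} is totally ordered by the prefix relation (i.e., all these positions lie on a common root-to-leaf path of the binary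 tree). -/
/-!
Form the clusters in decreasing order of size. When a cluster of size `L` is due, the `C(L)`
elements of the smaller clusters are still unassigned, so at least `C(L) + L` elements are
available. If no root-to-leaf path carried `L` of them, fewer than `2 ^ k * L` of them would have
depth at most `k`, since every such element lies on the path to one of the `2 ^ k` nodes of depth
`k`. For `k = ⌊log₂ (C(L) / 2L)⌋`, or `k = 0` if this is negative, more than `C(L) / 2` elements
then have depth at least `k + 1`, and their total depth exceeds the bound `2M`.
-/

open Finset

section Partition

variable {ι α : Type*}

theorem sum_filter_lt_add_le_sum (s : ι → ℕ) {J : Finset ι} {i : ι} (hi : i ∈ J) :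
    ∑ j ∈ J with s j < s i, s j + s i ≤ ∑ j ∈ J, s j := by
  classical
  rw [add_comm, ← sum_insert (by simp : i ∉ J.filter fun j => s j < s i)]
  exact sum_le_sum_of_subset (insert_subset hi (filter_subset _ _))

theorem exists_partition_of_greedy [DecidableEq α] (s : ι → ℕ) (P : Finset α → Prop)
    (J : Finset ι) (R : Finset α) (hcard : #R = ∑ j ∈ J, s j)
    (hsplit : ∀ i ∈ J, ∀ T ⊆ R, ∑ j ∈ J with s j < s i, s j + s i ≤ #T →
      ∃ Y ⊆ T, #Y = s i ∧ P Y) :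
    ∃ X : ι → Finset α, (J : Set ι).PairwiseDisjoint X ∧ J.biUnion X = R ∧
      ∀ j ∈ J, #(X j) = s j ∧ P (X j) := by
  classical
  induction J using Finset.induction_on_max_value s generalizing R with
  | empty => exact ⟨fun _ => ∅, by simp_all⟩
  | insert i J hi hmax ih =>
    obtain ⟨Y, hYR, hYcard, hYP⟩ := hsplit i (mem_insert_self i J) R Subset.rfl
      (hcard ▸ sum_filter_lt_add_le_sum s (mem_insert_self i J))
    have hcard_rest : #(R \ Y) = ∑ j ∈ J, s j := by
      rw [card_sdiff_of_subset hYR, hcard, hYcard, sum_insert hi, Nat.add_sub_cancel_left]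
    have hsplit_rest : ∀ j ∈ J, ∀ T ⊆ R \ Y, ∑ j' ∈ J with s j' < s j, s j' + s j ≤ #T →
        ∃ Z ⊆ T, #Z = s j ∧ P Z := fun j hj T hT hle =>
      hsplit j (mem_insert_of_mem hj) T (hT.trans sdiff_subset)
        (by rwa [filter_insert, if_neg (hmax j hj).not_gt])
    obtain ⟨X, hdisj, hunion, hX⟩ := ih (R \ Y) hcard_rest hsplit_rest
    have hupdate : ∀ j ∈ J, Function.update X i Y j = X j := fun j hj =>
      Function.update_of_ne (ne_of_mem_of_not_mem hj hi) Y X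
    refine ⟨Function.update X i Y, ?_, ?_, ?_⟩
    · rw [coe_insert, Set.pairwiseDisjoint_insert_of_notMem (mod_cast hi)]
      refine ⟨fun j hj j' hj' hne => ?_, fun j hj => ?_⟩
      · simpa only [Function.onFun, hupdate j hj, hupdate j' hj'] using hdisj hj hj' hne
      · rw [Function.update_self, hupdate j hj]
        exact disjoint_sdiff.mono_right (hunion ▸ subset_biUnion_of_mem X hj)
    · rw [biUnion_insert, Function.update_self, biUnion_congr rfl hupdate, hunion,
        union_sdiff_of_subset hYR]
    · rw [forall_mem_insert, Function.update_self]
      exact ⟨⟨hYcard, hYP⟩, fun j hj => hupdate j hj ▸ hX j hj⟩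

end Partition

theorem pow_floor_logb_le_max_one {b : ℝ} (hb : 1 < b) (x : ℝ) (hx : 0 ≤ x) :
    b ^ ⌊Real.logb b x⌋₊ ≤ max 1 x := by
  rcases le_total 1 x with h | h
  · have hfloor := Nat.floor_le (Real.logb_nonneg hb h)
    rw [Real.le_logb_iff_rpow_le hb (by positivity), Real.rpow_natCast] at hfloor
    exact hfloor.trans (le_max_right 1 x)
  · simp [Nat.floor_of_nonpos (Real.logb_nonpos hb hx h)]

/-- The quantity `¼ c max {0, log_b (c / 2L)}`, whose minimum over `L`, with `b = 2` and
`c = C(L)`, is the number `M` of rounds. -/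
noncomputable def roundBound (b : ℝ) (c L : ℕ) : ℝ :=
  (1 / 4) * (c : ℝ) * max 0 (Real.logb b ((c : ℝ) / (2 * L)))

section Paths

variable {α β : Type*}

/-- The elements of `Y`, placed at the nodes `p x` of the tree of words over `β`, lie on a common
root-to-leaf path. Elements may share a node, so this is a condition on the elements. -/
def OnCommonPath (p : α → List β) (Y : Finset α) : Prop :=
  ∀ x ∈ Y, ∀ y ∈ Y, p x <+: p y ∨ p y <+: p x

theorem onCommonPath_of_card_le_one (p : α → List β) {Y : Finset α} (hY : #Y ≤ 1) :
    OnCommonPath p Y := fun x hx y hy => by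
  simp [card_le_one.mp hY x hx y hy]

theorem onCommonPath_filter_prefix [DecidableEq β] (p : α → List β) (R : Finset α) (w : List β) :
    OnCommonPath p {x ∈ R | p x <+: w} := fun _ hx _ hy =>
  List.prefix_or_prefix_of_prefix (mem_filter.mp hx).2 (mem_filter.mp hy).2

variable [Fintype β] {p : α → List β} {R : Finset α} {c l : ℕ}

theorem card_filter_length_le_lt [DecidableEq β] [Nonempty β]
    (hpath : ∀ w, #{x ∈ R | p x <+: w} < l) (k : ℕ) :
    #{x ∈ R | (p x).length ≤ k} < Fintype.card β ^ k * l := by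
  classical
  inhabit β
  have hcover : {x ∈ R | (p x).length ≤ k} ⊆
      (univ : Finset (List.Vector β k)).biUnion fun v => {x ∈ R | p x <+: v.toList} := by
    intro x hx
    obtain ⟨hxR, hxk⟩ := mem_filter.mp hx
    let v : List.Vector β k := ⟨p x ++ List.replicate (k - (p x).length) default, by simp; omega⟩
    exact mem_biUnion.mpr ⟨v, mem_univ v, mem_filter.mpr ⟨hxR, List.prefix_append _ _⟩⟩
  calc #{x ∈ R | (p x).length ≤ k}
      ≤ ∑ v : List.Vector β k, #{x ∈ R | p x <+: v.toList} :=
        (card_le_card hcover).trans card_biUnion_le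
    _ < ∑ _v : List.Vector β k, l :=
        sum_lt_sum_of_nonempty ⟨.replicate k default, mem_univ _⟩ fun v _ => hpath v.toList
    _ = Fintype.card β ^ k * l := by simp [card_vector]

theorem two_mul_roundBound_lt_sum_length [DecidableEq β] [Nontrivial β] (hcard : c + l ≤ #R)
    (hpath : ∀ w, #{x ∈ R | p x <+: w} < l) :
    2 * roundBound (Fintype.card β) c l < ∑ x ∈ R, ((p x).length : ℝ) := by
  set t := Real.logb (Fintype.card β) ((c : ℝ) / (2 * l)) with ht
  set k := ⌊t⌋₊
  have hl : (0 : ℝ) < l := mod_cast (Nat.zero_le _).trans_lt (hpath [])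
  have hshallow : (#{x ∈ R | (p x).length ≤ k} : ℝ) < Fintype.card β ^ k * l :=
    mod_cast card_filter_length_le_lt hpath k
  have hpow : (Fintype.card β : ℝ) ^ k * l ≤ c / 2 + l := by
    calc (Fintype.card β : ℝ) ^ k * l
        ≤ max 1 ((c : ℝ) / (2 * l)) * l := by
          gcongr
          exact pow_floor_logb_le_max_one (mod_cast Fintype.one_lt_card) _ (by positivity)
      _ ≤ (1 + c / (2 * l)) * l := by
          gcongr
          exact max_le_add_of_nonneg zero_le_one (by positivity)
      _ = c / 2 + l := by field_simp; ring
  have hdeep : (c : ℝ) / 2 < #{x ∈ R | ¬ (p x).length ≤ k} := by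
    have hsplit : (#{x ∈ R | (p x).length ≤ k} + #{x ∈ R | ¬ (p x).length ≤ k} : ℝ) = #R :=
      mod_cast card_filter_add_card_filter_not _
    have hcard' : (c + l : ℝ) ≤ #R := mod_cast hcard
    linarith
  calc 2 * roundBound (Fintype.card β) c l
      = c / 2 * max 0 t := by rw [roundBound, ← ht]; ring
    _ ≤ c / 2 * (k + 1) := by
        gcongr
        exact max_le (by positivity) (Nat.lt_floor_add_one t).le
    _ < #{x ∈ R | ¬ (p x).length ≤ k} * (k + 1) := by gcongr
    _ ≤ ∑ x ∈ R with ¬ (p x).length ≤ k, ((p x).length : ℝ) := by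
        rw [← nsmul_eq_mul]
        exact card_nsmul_le_sum _ _ _ fun x hx => mod_cast not_le.mp (mem_filter.mp hx).2
    _ ≤ ∑ x ∈ R, ((p x).length : ℝ) :=
        sum_le_sum_of_subset_of_nonneg (filter_subset _ _) fun _ _ _ => by positivity

theorem exists_onCommonPath_of_sum_length_le [Nontrivial β] (hcard : c + l ≤ #R)
    (hdepth : ∑ x ∈ R, ((p x).length : ℝ) ≤ 2 * roundBound (Fintype.card β) c l) :
    ∃ Y ⊆ R, #Y = l ∧ OnCommonPath p Y := by
  classical
  obtain ⟨w, hw⟩ : ∃ w, l ≤ #{x ∈ R | p x <+: w} := by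
    by_contra! hpath
    exact hdepth.not_gt (two_mul_roundBound_lt_sum_length hcard hpath)
  obtain ⟨Y, hY, hYcard⟩ := exists_subset_card_eq hw
  exact ⟨Y, hY.trans (filter_subset _ _), hYcard, fun x hx y hy =>
    onCommonPath_filter_prefix p R w x (hY hx) y (hY hy)⟩

end Paths

section Clusters

variable {ι : Type*} [Fintype ι]

/-- The total size `C(L)` of the clusters of size less than `L`, for clusters of sizes `s j`. -/
def smallClusterTotal (s : ι → ℕ) (L : ℕ) : ℕ :=
  ∑ j with s j < L, s j

theorem sInf_roundBound_le (b : ℝ) (s : ι → ℕ) {i : ι} (hi : 2 ≤ s i) :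
    sInf {y : ℝ | ∃ L : ℕ, 2 ≤ L ∧ L ≤ ∑ j, s j ∧ smallClusterTotal s L < ∑ j, s j ∧
      y = roundBound b (smallClusterTotal s L) L} ≤
      roundBound b (smallClusterTotal s (s i)) (s i) := by
  have hle : smallClusterTotal s (s i) + s i ≤ ∑ j, s j := sum_filter_lt_add_le_sum s (mem_univ i)
  refine csInf_le ⟨0, ?_⟩ ⟨s i, hi, by omega, by omega, rfl⟩
  rintro y ⟨L, -, -, -, rfl⟩
  unfold roundBound
  positivity

theorem stmt_2_general {α β : Type*} [Fintype α] [Fintype β] [Nontrivial β] (s : ι → ℕ)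
    (hsum : ∑ j, s j = Fintype.card α) (p : α → List β)
    (hp : ∀ i, 2 ≤ s i → ∑ x, ((p x).length : ℝ) ≤
      2 * roundBound (Fintype.card β) (smallClusterTotal s (s i)) (s i)) :
    ∃ X : ι → Finset α, (∀ j, #(X j) = s j) ∧ (∀ j j', j ≠ j' → Disjoint (X j) (X j')) ∧
      (∀ x, ∃ j, x ∈ X j) ∧ ∀ j, OnCommonPath p (X j) := by
  classical
  obtain ⟨X, hdisj, hunion, hX⟩ := exists_partition_of_greedy s (OnCommonPath p) univ univ
    (by rw [card_univ, hsum]) fun i _ T _ hT => by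
      rcases Nat.lt_or_ge (s i) 2 with hsmall | hlarge
      · obtain ⟨Y, hYT, hYcard⟩ := exists_subset_card_eq (le_of_add_le_right hT)
        exact ⟨Y, hYT, hYcard, onCommonPath_of_card_le_one p (by omega)⟩
      · exact exists_onCommonPath_of_sum_length_le hT
          ((sum_le_univ_sum_of_nonneg fun _ => by positivity).trans (hp i hlarge))
  refine ⟨X, fun j => (hX j (mem_univ j)).1, fun j j' hne => hdisj (by simp) (by simp) hne,
    fun x => ?_, fun j => (hX j (mem_univ j)).2⟩
  simpa using hunion.ge (mem_univ x)

end Clusters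

/-- Claim 9 ('isomorphic'): if the total depth of all elements is at most `2·M`, where
`M = min over 2 ≤ L ≤ n with C(L) < n of (1/4)·C(L)·max{0, log₂(C(L)/(2L))}`,
then the cluster structure with sizes `s₁ ≥ … ≥ s_m` can be realized so that every
cluster lies on a single root-to-leaf path of the binary tree. -/
theorem stmt_2 (m n : ℕ) (hm : 0 < m) (s : Fin m → ℕ)
    (hdec : ∀ i j : Fin m, i ≤ j → s j ≤ s i)
    (hpos : ∀ j, 1 ≤ s j)
    (h2 : 2 ≤ s ⟨0, hm⟩)
    (hsum : ∑ j, s j = n)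
    (C : ℕ → ℕ)
    (hC : ∀ L, C L = ∑ j ∈ Finset.univ.filter (fun j => s j < L), s j)
    (M : ℝ)
    (hM : M = sInf {y : ℝ | ∃ L : ℕ, 2 ≤ L ∧ L ≤ n ∧ C L < n ∧
      y = (1 / 4) * (C L : ℝ) * max 0 (Real.logb 2 ((C L : ℝ) / (2 * L)))})
    (p : Fin n → List Bool)
    (hp : (∑ x, ((p x).length : ℝ)) ≤ 2 * M) :
    ∃ X : Fin m → Finset (Fin n),
      (∀ j, (X j).card = s j) ∧
      (∀ j j', j ≠ j' → Disjoint (X j) (X j')) ∧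
      (∀ x, ∃ j, x ∈ X j) ∧
      (∀ j, ∀ x ∈ X j, ∀ y ∈ X j, p x <+: p y ∨ p y <+: p x) := by
  obtain rfl : C = smallClusterTotal s := funext hC
  subst hM hsum
  refine stmt_2_general s (by simp) p fun i hi => hp.trans ?_
  simpa [roundBound] using sInf_roundBound_le 2 s hi
end

section
/- There exists n₀ such that for every integer n ≥ n₀ the following holds. For every function p : Fin n → List Bool with ∑_{x} (length of p(x)) ≤ (1/4)·n·log₂(log₂ n), there exist an integer L with 2 ≤ L ≤ n, an integer r ≥ 1, and pairwise disjoint subsets X₁, …, X_r of Fin n, each of size exactly L, such that for every j the set {p(x) : x ∈ X_j} is totally ordered by the prefix relation, and the number C = n − r·L of elements not covered by the X_j satisfies C·max{0, log₂(C/L)} ≤ 4·n. -/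
/-!
Let `b` be the size of the alphabet and fix a level `h`. The words of length at most `h` have at
most `b ^ h` distinct paddings to length `h`, and words with the same padding are comparable. Hence
a maximal packing by clusters of size `L` leaves uncovered at most `b ^ h * L` elements besides the
`N` elements of depth more than `h`.

The numbers `N` of all levels sum to the total depth, whereas the numbers `n / (h + 1)` sum over
`1 ≤ h < log_b n / 2` to about `n * log (log_b n)`. If the total depth is at most
`c * n * log_b (log_b n)` with `c < log b`, then some such `h` has `N < n / (h + 1)`. Take
`L = ⌊n / b ^ (2 * h)⌋`. Then the number `C` of uncovered elements is at most
`n / (h + 1) + n / b ^ h`, while `log_b (C / L) ≤ 2 * h + 1`, and each of the two summands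
contributes at most `2 * n` to the product.
-/

open Finset Filter Function

theorem exists_maximal_packing {ι : Type*} [Finite ι] (Q : Finset ι → Prop) :
    ∃ P : Finset (Finset ι), (P : Set (Finset ι)).PairwiseDisjoint id ∧ (∀ X ∈ P, Q X) ∧
      ∀ X, Q X → (∀ Y ∈ P, Disjoint X Y) → X = ∅ := by
  classical
  obtain ⟨P, ⟨hdisj, hQ⟩, hmax⟩ := {P : Finset (Finset ι) |
    (P : Set (Finset ι)).PairwiseDisjoint id ∧ ∀ X ∈ P, Q X}.toFinite.exists_maximal ⟨∅, by simp⟩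
  refine ⟨P, hdisj, hQ, fun X hX hXP => ?_⟩
  have hinsert : (↑(insert X P) : Set (Finset ι)).PairwiseDisjoint id := by
    rw [coe_insert]
    exact hdisj.insert fun Y hY _ => hXP Y hY
  have hmem : X ∈ P := hmax ⟨hinsert, forall_mem_insert _ _ _ |>.2 ⟨hX, hQ⟩⟩
    (subset_insert X P) (mem_insert_self X P)
  exact disjoint_self.1 (hXP X hmem)

section Clusters

variable {ι α : Type*} {p : ι → List α} {L : ℕ}

/-- `X` is a cluster of size `L` for the positions `p`: it has `L` elements, and their positions lie
on a common root-to-leaf path. -/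
structure IsCluster (p : ι → List α) (L : ℕ) (X : Finset ι) : Prop where
  card_eq : #X = L
  comparable : ∀ x ∈ X, ∀ y ∈ X, p x <+: p y ∨ p y <+: p x

theorem isPrefix_or_isPrefix_of_rightpad_eq {l₁ l₂ : List α} {h : ℕ} {a : α}
    (heq : l₁.rightpad h a = l₂.rightpad h a) : l₁ <+: l₂ ∨ l₂ <+: l₁ :=
  have h₁ : l₁ <+: l₁.rightpad h a := List.prefix_append _ _
  have h₂ : l₂ <+: l₂.rightpad h a := List.prefix_append _ _
  List.prefix_or_prefix_of_prefix h₁ (heq ▸ h₂)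

theorem exists_isCluster_subset [Fintype α] [Nonempty α] {h : ℕ} {S : Finset ι}
    (hlength : ∀ x ∈ S, (p x).length ≤ h) (hcard : Fintype.card α ^ h * L ≤ #S) :
    ∃ X ⊆ S, IsCluster p L X := by
  classical
  obtain ⟨a⟩ := ‹Nonempty α›
  let words : Finset (List α) := univ.image (List.Vector.toList (n := h))
  have hwords : #words = Fintype.card α ^ h := by
    rw [card_image_of_injective _ List.Vector.toList_injective, card_univ, card_vector]
  have hmaps : ∀ x ∈ S, (p x).rightpad h a ∈ words := fun x hx =>
    mem_image.2 ⟨⟨_, List.length_rightpad.trans (max_eq_left (hlength x hx))⟩, mem_univ _, rfl⟩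
  have hne : words.Nonempty := card_pos.1 (by rw [hwords]; positivity)
  obtain ⟨w, -, hw⟩ :=
    exists_le_card_fiber_of_mul_le_card_of_maps_to hmaps hne (hwords ▸ hcard)
  obtain ⟨X, hXw, hX⟩ := exists_subset_card_eq hw
  refine ⟨X, hXw.trans (filter_subset _ _), hX, fun x hx y hy => ?_⟩
  exact isPrefix_or_isPrefix_of_rightpad_eq
    ((mem_filter.1 (hXw hx)).2.trans (mem_filter.1 (hXw hy)).2.symm)

theorem exists_cluster_packing [Fintype ι] [Fintype α] [Nonempty α] (p : ι → List α)
    (hL : 0 < L) : ∃ (r : ℕ) (X : Fin r → Finset ι),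
      Pairwise (Disjoint on X) ∧ (∀ i, IsCluster p L (X i)) ∧
      ∀ h, Fintype.card ι - r * L ≤ #{x | h < (p x).length} + Fintype.card α ^ h * L := by
  classical
  obtain ⟨P, hdisj, hP, hmax⟩ := exists_maximal_packing (IsCluster p L)
  refine ⟨#P, fun i => (P.equivFin.symm i : Finset ι), fun i j hij => ?_, fun i => ?_, fun h => ?_⟩
  · exact hdisj (P.equivFin.symm i).2 (P.equivFin.symm j).2 (by simpa [Subtype.val_inj] using hij)
  · exact hP _ (P.equivFin.symm i).2
  set U : Finset ι := (P.biUnion id)ᶜ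
  have hU : #U = Fintype.card ι - #P * L := by
    rw [card_compl, card_biUnion hdisj, sum_const_nat (m := L) (fun X hX => ?_)]
    exact (hP X hX).card_eq
  have hshallow : #{x ∈ U | (p x).length ≤ h} < Fintype.card α ^ h * L := by
    by_contra! hle
    obtain ⟨X, hXU, hX⟩ := exists_isCluster_subset (fun x hx => (mem_filter.1 hx).2) hle
    have hXempty : X = ∅ := hmax X hX fun Y hY =>
      disjoint_compl_left.mono (hXU.trans (filter_subset _ _)) (subset_biUnion_of_mem id hY)
    exact hL.ne' (by rw [← hX.card_eq, hXempty, card_empty])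
  have hdeep : #{x ∈ U | ¬ (p x).length ≤ h} ≤ #{x | h < (p x).length} :=
    card_le_card fun x hx => by simpa using (mem_filter.1 hx).2
  rw [← hU, ← card_filter_add_card_filter_not (s := U) fun x => (p x).length ≤ h]
  lia

end Clusters

section Levels

variable {ι : Type*} [Fintype ι] {d : ι → ℕ}

theorem sum_card_filter_lt_le (d : ι → ℕ) (s : Finset ℕ) :
    ∑ h ∈ s, #{x | h < d x} ≤ ∑ x, d x :=
  calc ∑ h ∈ s, #{x | h < d x} = ∑ x, #{h ∈ s | h < d x} :=
        sum_card_bipartiteAbove_eq_sum_card_bipartiteBelow fun h x => h < d x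
    _ ≤ ∑ x, #(range (d x)) := sum_le_sum fun x _ => card_le_card fun h hh =>
        mem_range.2 (mem_filter.1 hh).2
    _ = ∑ x, d x := by simp only [card_range]

theorem exists_card_filter_lt_lt_of_sum_lt {s : Finset ℕ} {w : ℕ → ℝ}
    (hd : ∑ x, (d x : ℝ) < ∑ h ∈ s, w h) : ∃ h ∈ s, (#{x | h < d x} : ℝ) < w h :=
  exists_lt_of_sum_lt (lt_of_le_of_lt (by exact_mod_cast sum_card_filter_lt_le d s) hd)

theorem log_add_one_sub_one_le_sum_Ico_inv (m : ℕ) :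
    Real.log (m + 1) - 1 ≤ ∑ h ∈ Ico 1 m, ((h : ℝ) + 1)⁻¹ := by
  rcases m.eq_zero_or_pos with rfl | hm
  · simp
  have hlog := log_add_one_le_harmonic m
  rw [harmonic, range_eq_Ico, sum_eq_sum_Ico_succ_bot hm] at hlog
  push_cast at hlog
  rw [inv_one] at hlog
  linarith

theorem eventually_mul_logb_logb_lt_sum_Ico_inv {b : ℕ} (hb : 1 < b) {c : ℝ}
    (hc : c < Real.log b) : ∀ᶠ n : ℕ in atTop,
      c * Real.logb b (Real.logb b n) < ∑ h ∈ Ico 1 ((Nat.log b n + 1) / 2), ((h : ℝ) + 1)⁻¹ := by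
  have hb' : (1 : ℝ) < b := by exact_mod_cast hb
  have hlogb : 0 < Real.log b := Real.log_pos hb'
  have hy : Tendsto (fun n : ℕ => Real.logb b n) atTop atTop :=
    (Real.tendsto_logb_atTop hb').comp tendsto_natCast_atTop_atTop
  have hgap : Tendsto (fun n : ℕ => (Real.log b - c) * Real.logb b (Real.logb b n)) atTop atTop :=
    ((Real.tendsto_logb_atTop hb').comp hy).const_mul_atTop (sub_pos.2 hc)
  filter_upwards [hy.eventually_gt_atTop 0, hgap.eventually_gt_atTop (Real.log 2 + 1)]
    with n hpos hlarge
  set y := Real.logb b n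
  set m := (Nat.log b n + 1) / 2
  have hym : y / 2 ≤ m + 1 := by
    have hfloor : y < Nat.log b n + 1 := by
      rw [← Real.natFloor_logb_natCast]
      exact Nat.lt_floor_add_one y
    have hlog_le : (Nat.log b n : ℝ) ≤ 2 * m := by
      exact_mod_cast (by lia : Nat.log b n ≤ 2 * m)
    linarith
  have hlogy : Real.log y = Real.log b * Real.logb b y :=
    (mul_div_cancel₀ _ hlogb.ne').symm
  calc c * Real.logb b y
      < Real.log (y / 2) - 1 := by
        rw [Real.log_div hpos.ne' two_ne_zero, hlogy]
        linarith
    _ ≤ Real.log (m + 1) - 1 := by gcongr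
    _ ≤ ∑ h ∈ Ico 1 m, ((h : ℝ) + 1)⁻¹ := log_add_one_sub_one_le_sum_Ico_inv m

theorem eventually_exists_level {b : ℕ} (hb : 1 < b) {c : ℝ} (hc : c < Real.log b) :
    ∀ᶠ n : ℕ in atTop, ∀ d : Fin n → ℕ,
      ∑ x, (d x : ℝ) ≤ c * n * Real.logb b (Real.logb b n) →
      ∃ h, 1 ≤ h ∧ b ^ (2 * h + 1) ≤ n ∧ #{x | h < d x} * (h + 1) < n := by
  filter_upwards [eventually_mul_logb_logb_lt_sum_Ico_inv hb hc, eventually_gt_atTop 0]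
    with n hsum hn d hd
  have hweights : ∑ x, (d x : ℝ) <
      ∑ h ∈ Ico 1 ((Nat.log b n + 1) / 2), (n : ℝ) * ((h : ℝ) + 1)⁻¹ := by
    rw [← mul_sum]
    calc ∑ x, (d x : ℝ) ≤ n * (c * Real.logb b (Real.logb b n)) := by linarith
      _ < n * ∑ h ∈ Ico 1 ((Nat.log b n + 1) / 2), ((h : ℝ) + 1)⁻¹ := by gcongr
  obtain ⟨h, hmem, hlt⟩ := exists_card_filter_lt_lt_of_sum_lt hweights
  obtain ⟨hh, hm⟩ := mem_Ico.1 hmem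
  refine ⟨h, hh, Nat.pow_le_of_le_log hn.ne' (by lia), ?_⟩
  rw [← div_eq_mul_inv, lt_div_iff₀ (by positivity)] at hlt
  exact_mod_cast hlt

end Levels

section Leftover

variable {n b h N C : ℕ}

theorem leftover_mul_le (hb : 1 < b) (hN : N * (h + 1) ≤ n)
    (hC : C ≤ N + b ^ h * (n / b ^ (2 * h))) : C * (2 * h + 1) ≤ 4 * n := by
  have hlt : h < b ^ h := Nat.lt_pow_self hb
  have hpow : 2 * h + 1 ≤ 2 * b ^ h := by lia
  calc C * (2 * h + 1) ≤ (N + b ^ h * (n / b ^ (2 * h))) * (2 * h + 1) := by gcongr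
    _ = N * (2 * h + 1) + b ^ h * (n / b ^ (2 * h)) * (2 * h + 1) := add_mul _ _ _
    _ ≤ N * (2 * (h + 1)) + b ^ h * (n / b ^ (2 * h)) * (2 * b ^ h) := by gcongr; lia
    _ = 2 * (N * (h + 1)) + 2 * (n / b ^ (2 * h) * b ^ (2 * h)) := by ring
    _ ≤ 2 * n + 2 * n := by gcongr; exact Nat.div_mul_le_self _ _
    _ = 4 * n := by ring

theorem leftover_lt (hb : 1 < b) (hh : 1 ≤ h) (hN : N * (h + 1) < n)
    (hC : C ≤ N + b ^ h * (n / b ^ (2 * h))) : C < n := by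
  have hpow : 2 ≤ b ^ h := hb.trans_le (Nat.le_self_pow (by lia) b)
  have hdeep : N * 2 < n := lt_of_le_of_lt (by gcongr; lia) hN
  have hshallow : b ^ h * (n / b ^ (2 * h)) * 2 ≤ n :=
    calc b ^ h * (n / b ^ (2 * h)) * 2 ≤ b ^ h * (n / b ^ (2 * h)) * b ^ h := by gcongr
      _ = n / b ^ (2 * h) * b ^ (2 * h) := by ring
      _ ≤ n := Nat.div_mul_le_self _ _
  lia

theorem logb_div_div_pow_le (hb : 1 < b) (hn : b ^ h ≤ n) (hC : C ≤ n) :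
    Real.logb b (C / (n / b ^ h : ℕ)) ≤ h + 1 := by
  have hL : 0 < n / b ^ h := Nat.div_pos hn (by positivity)
  rcases C.eq_zero_or_pos with rfl | hCpos
  · simp only [Nat.cast_zero, zero_div, Real.logb_zero]
    positivity
  have hnL : n ≤ b ^ (h + 1) * (n / b ^ h) :=
    calc n ≤ b ^ h * (n / b ^ h + 1) := (Nat.lt_mul_div_succ n (by positivity)).le
      _ ≤ b ^ h * (b * (n / b ^ h)) := by gcongr; nlinarith
      _ = b ^ (h + 1) * (n / b ^ h) := by ring
  have hCL : (C : ℝ) ≤ b ^ (h + 1) * (n / b ^ h : ℕ) := by exact_mod_cast hC.trans hnL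
  rw [Real.logb_le_iff_le_rpow (by exact_mod_cast hb) (by positivity),
    div_le_iff₀ (by exact_mod_cast hL)]
  exact_mod_cast hCL

end Leftover

theorem stmt_3_general {α : Type*} [Fintype α] [Nontrivial α] {c : ℝ}
    (hc : c < Real.log (Fintype.card α)) : ∀ᶠ n : ℕ in atTop, ∀ p : Fin n → List α,
      (∑ x, ((p x).length : ℝ)) ≤
        c * n * Real.logb (Fintype.card α) (Real.logb (Fintype.card α) n) →
      ∃ (L r : ℕ), 2 ≤ L ∧ L ≤ n ∧ 1 ≤ r ∧
        ∃ X : Fin r → Finset (Fin n),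
          Pairwise (Disjoint on X) ∧ (∀ i, IsCluster p L (X i)) ∧
          ((n - r * L : ℕ) : ℝ) *
            max 0 (Real.logb (Fintype.card α) (((n - r * L : ℕ) : ℝ) / L)) ≤ 4 * n := by
  have hb : 1 < Fintype.card α := Fintype.one_lt_card
  filter_upwards [eventually_exists_level hb hc] with n hlevel p hp
  obtain ⟨h, hh, hn, hN⟩ := hlevel (fun x => (p x).length) hp
  set b := Fintype.card α
  set L := n / b ^ (2 * h)
  have hL : 2 ≤ L := by
    rw [Nat.le_div_iff_mul_le (by positivity)]
    exact le_trans (by rw [pow_succ']; gcongr; exact hb) hn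
  obtain ⟨r, X, hdisj, hX, hcover⟩ := exists_cluster_packing p (by lia : 0 < L)
  have hC : n - r * L ≤ #{x | h < (p x).length} + b ^ h * L := by simpa using hcover h
  refine ⟨L, r, hL, Nat.div_le_self _ _, ?_, X, hdisj, hX, ?_⟩
  · rw [Nat.one_le_iff_ne_zero]
    rintro rfl
    have huncovered : n - 0 * L < n := leftover_lt hb hh hN hC
    lia
  · have hlog := logb_div_div_pow_le hb ((Nat.pow_le_pow_right (by lia) (by lia)).trans hn)
      (Nat.sub_le n (r * L)) (h := 2 * h)
    calc ((n - r * L : ℕ) : ℝ) * max 0 (Real.logb b (((n - r * L : ℕ) : ℝ) / L))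
        ≤ ((n - r * L : ℕ) : ℝ) * (2 * h + 1) := by
          gcongr
          exact max_le (by positivity) (by exact_mod_cast hlog)
      _ ≤ 4 * n := by exact_mod_cast leftover_mul_le hb hN.le hC

/-- Combinatorial core of Theorem 5: for large `n`, if the total depth of the `n`
positions is at most `(1/4)·n·log₂ log₂ n`, then the elements can be packed into
`r ≥ 1` disjoint clusters of equal size `L` (each on one root-to-leaf path) so that
the `C = n − r·L` leftover elements satisfy `C·max{0, log₂(C/L)} ≤ 4n`. -/
theorem stmt_3 : ∃ n₀ : ℕ, ∀ n : ℕ, n₀ ≤ n →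
    ∀ p : Fin n → List Bool,
      (∑ x, ((p x).length : ℝ)) ≤ (1 / 4) * n * Real.logb 2 (Real.logb 2 n) →
      ∃ (L r : ℕ), 2 ≤ L ∧ L ≤ n ∧ 1 ≤ r ∧
        ∃ X : Fin r → Finset (Fin n),
          (∀ i j, i ≠ j → Disjoint (X i) (X j)) ∧
          (∀ i, (X i).card = L) ∧
          (∀ i, ∀ x ∈ X i, ∀ y ∈ X i, p x <+: p y ∨ p y <+: p x) ∧
          ((n - r * L : ℕ) : ℝ) *
              max 0 (Real.logb 2 (((n - r * L : ℕ) : ℝ) / L)) ≤ 4 * n := by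
  obtain ⟨n₀, hn₀⟩ := eventually_atTop.1 (stmt_3_general (α := Bool) (c := 1 / 4)
    (by rw [Fintype.card_bool]; linarith [Real.log_two_gt_d9]))
  refine ⟨n₀, fun n hn p hp => ?_⟩
  obtain ⟨L, r, hL, hLn, hr, X, hdisj, hX, hC⟩ := hn₀ n hn p (by simpa using hp)
  exact ⟨L, r, hL, hLn, hr, X, fun _ _ hij => hdisj hij, fun i => (hX i).card_eq,
    fun i => (hX i).comparable, by simpa using hC⟩
end

section
/- Let s be a multiset of positive integers with at least two elements and with sum n, and let s' be a sub-multiset of s obtained as follows: s = s' + t for some multiset t such that every element of t is ≥ every element of s', the sum n' of s' satisfies n' ≤ (3/4)·n, and the deletion is minimal, i.e., t is nonempty and n' + min(t) > (3/4)·n. For an integer L, let C(L) (resp. C'(L)) be the sum of the elements of s (resp. s') that are < L, and D(L) (resp. D'(L)) the number of elements of s (resp. s') that are ≥ L. Then min( n'/8 , (1/32)·min_{L ≥ 1, C'(L) < n'} (C'(L) + D'(L))·max{1, log₂ D'(L)} ) ≥ (1/1000)·min( n , min_{L ≥ 1, C(L) < n/2} (C(L) + D(L))·max{1, log₂ D(L)}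 ). -/
/-!
A threshold `L` with `C'(L) < n'` is at most some kept size, hence at most every deleted size. So
passing to the full multiset leaves the mass below `L` unchanged and only adds the deleted elements
to the count above `L`. If `C(L) < n / 2`, minimality of the trimming makes the deleted sizes so
large that they number at most one more than the kept sizes `≥ L`; the count, and hence the cost,
grows by a constant factor only. Otherwise the mass below `L` is already half the total.

The kept mass can be a small fraction of the total only when a single huge element was deleted;
a threshold separating that element from all others then costs just the kept mass plus one.
-/

/-- The total size `C(L)` of the clusters of size less than `L`. -/
def smallMass (s : Multiset ℕ) (L : ℕ) : ℕ := (s.filter (fun a => a < L)).sum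

/-- The number `D(L)` of clusters of size at least `L`. -/
def largeCount (s : Multiset ℕ) (L : ℕ) : ℕ := (s.filter (fun a => L ≤ a)).card

/-- The cost `(C(L) + D(L)) · max {1, log₂ D(L)}` of the threshold `L`. At `D(L) = 0` the junk value
`Real.logb 2 0 = 0` makes the logarithmic factor `1`. -/
noncomputable def thresholdCost (s : Multiset ℕ) (L : ℕ) : ℝ :=
  ((smallMass s L : ℝ) + (largeCount s L : ℝ)) * max 1 (Real.logb 2 (largeCount s L : ℝ))

/-- The least cost of a threshold `L ≥ 1` satisfying `p`. It is an infimum of reals, so it has the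
junk value `0` when no threshold satisfies `p`. -/
noncomputable def minThresholdCost (s : Multiset ℕ) (p : ℕ → Prop) : ℝ :=
  sInf {y : ℝ | ∃ L : ℕ, 1 ≤ L ∧ p L ∧ y = thresholdCost s L}

/-- The Block-Sorting lower bound, up to a constant factor, for a graph with cluster sizes `s`: the
minimum of the number `n` of vertices and the least cost of a threshold with `C(L) < n / 2`. -/
noncomputable def blockSortingBound (s : Multiset ℕ) : ℝ :=
  min (s.sum : ℝ) (minThresholdCost s fun L => (smallMass s L : ℝ) < (s.sum : ℝ) / 2)

/-- `t` arises from `s + t` by deleting largest elements, never continuing once the kept sum is at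
most `3/4` of the total: with any element of `t` put back, the kept part `s` exceeds that bound.
The inequality is multiplied by `4` to stay in `ℕ`. -/
structure IsMinimalTrim (s t : Multiset ℕ) : Prop where
  le_of_mem : ∀ a ∈ t, ∀ b ∈ s, b ≤ a
  three_mul_sum_lt : ∀ a ∈ t, 3 * (s + t).sum < 4 * (s.sum + a)

section Thresholds

variable {s t : Multiset ℕ} {L : ℕ}

lemma smallMass_add_sum_filter_le (s : Multiset ℕ) (L : ℕ) :
    smallMass s L + (s.filter (fun a => L ≤ a)).sum = s.sum := by
  simpa only [smallMass, not_lt] using Multiset.sum_filter_add_sum_filter_not (s := s) (· < L)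

lemma smallMass_one (s : Multiset ℕ) : smallMass s 1 = 0 :=
  Multiset.sum_eq_zero fun _ hb => Nat.lt_one_iff.1 (Multiset.mem_filter.1 hb).2

lemma smallMass_eq_sum (h : ∀ b ∈ s, b < L) : smallMass s L = s.sum := by
  rw [smallMass, Multiset.filter_eq_self.2 h]

lemma smallMass_add_of_forall_le (h : ∀ a ∈ t, L ≤ a) : smallMass (s + t) L = smallMass s L := by
  rw [smallMass, Multiset.filter_add, Multiset.filter_eq_nil.2 fun a ha => (h a ha).not_gt,
    add_zero, smallMass]

lemma largeCount_pos_iff : 0 < largeCount s L ↔ ∃ b ∈ s, L ≤ b := by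
  simp only [largeCount, Multiset.card_pos_iff_exists_mem, Multiset.mem_filter]

lemma largeCount_eq_zero (h : ∀ b ∈ s, b < L) : largeCount s L = 0 := by
  rw [largeCount, Multiset.filter_eq_nil.2 fun b hb => (h b hb).not_ge, Multiset.card_zero]

lemma largeCount_add_of_forall_le (h : ∀ a ∈ t, L ≤ a) :
    largeCount (s + t) L = largeCount s L + t.card := by
  rw [largeCount, Multiset.filter_add, Multiset.filter_eq_self.2 h, Multiset.card_add, largeCount]

lemma exists_le_of_smallMass_lt_sum (h : smallMass s L < s.sum) : ∃ b ∈ s, L ≤ b := by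
  contrapose! h
  exact (smallMass_eq_sum h).ge

lemma sum_le_smallMass_add_largeCount_mul {a : ℕ} (h : ∀ b ∈ s, b ≤ a) :
    s.sum ≤ smallMass s L + largeCount s L * a := by
  rw [← smallMass_add_sum_filter_le s L]
  gcongr
  exact Multiset.sum_le_card_nsmul _ a fun b hb => h b (Multiset.mem_of_mem_filter hb)

end Thresholds

lemma max_one_logb_le_mul {b x y : ℝ} {k : ℕ} (hb : 1 < b) (hy : 0 < y) (h : y ≤ b ^ k * x) :
    max 1 (Real.logb b y) ≤ (k + 1) * max 1 (Real.logb b x) := by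
  have hbk : 0 < b ^ k := by positivity
  have hx : 0 < x := pos_of_mul_pos_right (hy.trans_le h) hbk.le
  have hlog : Real.logb b y ≤ k + Real.logb b x :=
    calc Real.logb b y ≤ Real.logb b (b ^ k * x) := Real.logb_le_logb_of_le hb hy h
      _ = k + Real.logb b x := by
        rw [Real.logb_mul hbk.ne' hx.ne', Real.logb_pow, Real.logb_self_eq_one hb, mul_one]
  have hone := le_max_left 1 (Real.logb b x)
  have hk : (k : ℝ) ≤ k * max 1 (Real.logb b x) := le_mul_of_one_le_right k.cast_nonneg hone
  rw [add_mul, one_mul]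
  exact max_le (by linarith [k.cast_nonneg (α := ℝ)])
    (by linarith [le_max_right 1 (Real.logb b x)])

section Costs

variable {s t : Multiset ℕ} {L : ℕ}

lemma smallMass_le_thresholdCost (s : Multiset ℕ) (L : ℕ) :
    (smallMass s L : ℝ) ≤ thresholdCost s L :=
  calc (smallMass s L : ℝ) ≤ smallMass s L + largeCount s L := by simp
    _ ≤ thresholdCost s L := le_mul_of_one_le_right (by positivity) (le_max_left _ _)

lemma thresholdCost_nonneg (s : Multiset ℕ) (L : ℕ) : 0 ≤ thresholdCost s L :=
  (Nat.cast_nonneg _).trans (smallMass_le_thresholdCost s L)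

lemma thresholdCost_le_of_largeCount_le_one (h : largeCount s L ≤ 1) :
    thresholdCost s L ≤ smallMass s L + 1 := by
  have hlog : Real.logb 2 (largeCount s L) ≤ 0 :=
    Real.logb_nonpos one_lt_two (Nat.cast_nonneg _) (mod_cast h)
  rw [thresholdCost, max_eq_left (hlog.trans zero_le_one), mul_one]
  gcongr
  exact_mod_cast h

lemma thresholdCost_add_le_mul {k : ℕ} (htL : ∀ a ∈ t, L ≤ a) (hD : 0 < largeCount s L)
    (hk : largeCount s L + t.card ≤ 2 ^ k * largeCount s L) :
    thresholdCost (s + t) L ≤ 2 ^ k * (k + 1) * thresholdCost s L := by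
  have hkR : (largeCount s L + t.card : ℝ) ≤ 2 ^ k * largeCount s L := mod_cast hk
  have hC : (smallMass s L : ℝ) ≤ 2 ^ k * smallMass s L :=
    le_mul_of_one_le_left (Nat.cast_nonneg _) (one_le_pow₀ one_le_two)
  calc thresholdCost (s + t) L
      = (smallMass s L + (largeCount s L + t.card)) *
          max 1 (Real.logb 2 (largeCount s L + t.card)) := by
        rw [thresholdCost, smallMass_add_of_forall_le htL, largeCount_add_of_forall_le htL,
          Nat.cast_add]
    _ ≤ (2 ^ k * (smallMass s L + largeCount s L)) *
          ((k + 1) * max 1 (Real.logb 2 (largeCount s L))) := by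
        gcongr
        · linarith
        · exact max_one_logb_le_mul one_lt_two (by positivity) hkR
    _ = 2 ^ k * (k + 1) * thresholdCost s L := by rw [thresholdCost]; ring

lemma minThresholdCost_nonneg (s : Multiset ℕ) (p : ℕ → Prop) : 0 ≤ minThresholdCost s p :=
  Real.sInf_nonneg fun _ ⟨L, _, _, hy⟩ => hy ▸ thresholdCost_nonneg s L

lemma minThresholdCost_le {p : ℕ → Prop} (hL : 1 ≤ L) (hp : p L) :
    minThresholdCost s p ≤ thresholdCost s L := by
  refine csInf_le ⟨0, ?_⟩ ⟨L, hL, hp, rfl⟩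
  rintro _ ⟨K, -, -, rfl⟩
  exact thresholdCost_nonneg s K

lemma le_minThresholdCost {p : ℕ → Prop} {c : ℝ} (hp : ∃ L, 1 ≤ L ∧ p L)
    (h : ∀ L, 1 ≤ L → p L → c ≤ thresholdCost s L) : c ≤ minThresholdCost s p := by
  obtain ⟨L, hL, hpL⟩ := hp
  refine le_csInf ⟨_, L, hL, hpL, rfl⟩ ?_
  rintro _ ⟨K, hK, hpK, rfl⟩
  exact h K hK hpK

lemma blockSortingBound_le_sum (s : Multiset ℕ) : blockSortingBound s ≤ s.sum := min_le_left _ _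

lemma blockSortingBound_le_thresholdCost (hL : 1 ≤ L) (h : 2 * smallMass s L < s.sum) :
    blockSortingBound s ≤ thresholdCost s L := by
  have h' : (2 * smallMass s L : ℝ) < s.sum := mod_cast h
  exact (min_le_right _ _).trans (minThresholdCost_le hL (by linarith))

end Costs

namespace IsMinimalTrim

variable {s t : Multiset ℕ} {L : ℕ}

lemma card_le_largeCount_add_one (h : IsMinimalTrim s t) (hL : 2 * smallMass s L < (s + t).sum) :
    t.card ≤ largeCount s L + 1 := by
  rcases eq_or_ne t 0 with rfl | ht
  · simp
  obtain ⟨a, hat, hmin⟩ :=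
    WellFounded.has_min wellFounded_lt {a | a ∈ t} (Multiset.exists_mem_of_ne_zero ht)
  have hs : s.sum ≤ smallMass s L + largeCount s L * a :=
    sum_le_smallMass_add_largeCount_mul (h.le_of_mem a hat)
  have hlt := h.three_mul_sum_lt a hat
  rw [Multiset.sum_add] at hL hlt
  by_contra! hcard
  have htsum : largeCount s L * a + 2 * a ≤ t.sum :=
    calc largeCount s L * a + 2 * a = (largeCount s L + 2) * a := (add_mul _ _ _).symm
      _ ≤ t.card * a := Nat.mul_le_mul_right a hcard
      _ ≤ t.sum := Multiset.card_nsmul_le_sum fun b hb => not_lt.1 (hmin b hb)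
  omega

lemma left_ne_zero (h : IsMinimalTrim s t) (hcard : 2 ≤ (s + t).card) : s ≠ 0 := by
  rintro rfl
  rw [zero_add] at hcard
  obtain ⟨a, ha⟩ := Multiset.card_pos_iff_exists_mem.1 (two_pos.trans_le hcard)
  have hlt := h.three_mul_sum_lt a ha
  have hle := Multiset.le_sum_of_mem ha
  simp only [zero_add, Multiset.sum_zero] at hlt
  have hone := h.card_le_largeCount_add_one (L := 1) (by rw [smallMass_one, zero_add]; omega)
  rw [largeCount_eq_zero (by simp)] at hone
  omega

lemma blockSortingBound_le_three_mul_sum (h : IsMinimalTrim s t) (hs : 0 < s.sum) :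
    blockSortingBound (s + t) ≤ 3 * s.sum := by
  rcases le_or_gt (s + t).sum (3 * s.sum) with hle | hgt
  · exact (blockSortingBound_le_sum _).trans (mod_cast hle)
  have hsL : ∀ b ∈ s, b < s.sum + 1 := fun b hb => Nat.lt_succ_of_le (Multiset.le_sum_of_mem hb)
  have htL : ∀ a ∈ t, s.sum + 1 ≤ a := fun a ha => by
    have := h.three_mul_sum_lt a ha
    omega
  have hC := smallMass_eq_sum hsL
  have hD := largeCount_eq_zero hsL
  have hcard : t.card ≤ 1 := by
    simpa only [hD, zero_add] using
      h.card_le_largeCount_add_one (L := s.sum + 1) (by rw [hC]; omega)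
  have hC' : smallMass (s + t) (s.sum + 1) = s.sum := (smallMass_add_of_forall_le htL).trans hC
  have hD' : largeCount (s + t) (s.sum + 1) ≤ 1 := by
    rwa [largeCount_add_of_forall_le htL, hD, zero_add]
  have hsR : (1 : ℝ) ≤ s.sum := mod_cast hs
  calc blockSortingBound (s + t) ≤ thresholdCost (s + t) (s.sum + 1) :=
        blockSortingBound_le_thresholdCost (by omega) (by rw [hC']; omega)
    _ ≤ s.sum + 1 := by
        simpa only [hC'] using thresholdCost_le_of_largeCount_le_one hD'
    _ ≤ 3 * s.sum := by linarith

lemma blockSortingBound_le_twelve_mul_thresholdCost (h : IsMinimalTrim s t) (hL : 1 ≤ L)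
    (hlt : smallMass s L < s.sum) :
    blockSortingBound (s + t) ≤ 12 * thresholdCost s L := by
  obtain ⟨b, hb, hLb⟩ := exists_le_of_smallMass_lt_sum hlt
  have htL : ∀ a ∈ t, L ≤ a := fun a ha => hLb.trans (h.le_of_mem a ha b hb)
  have hD : 0 < largeCount s L := largeCount_pos_iff.2 ⟨b, hb, hLb⟩
  rcases le_or_gt (s + t).sum (2 * smallMass s L) with hle | hgt
  · have hleR : ((s + t).sum : ℝ) ≤ 2 * smallMass s L := mod_cast hle
    linarith [blockSortingBound_le_sum (s + t), smallMass_le_thresholdCost s L,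
      thresholdCost_nonneg s L]
  · have hcard := h.card_le_largeCount_add_one hgt
    calc blockSortingBound (s + t) ≤ thresholdCost (s + t) L :=
          blockSortingBound_le_thresholdCost hL (by rwa [smallMass_add_of_forall_le htL])
      _ ≤ 2 ^ 2 * ((2 : ℕ) + 1) * thresholdCost s L := thresholdCost_add_le_mul htL hD (by omega)
      _ = 12 * thresholdCost s L := by norm_num

end IsMinimalTrim

/-- Lemma 10 ('linear_subset'): relating the Block-Sorting lower-bound quantity of the
trimmed multiset `s'` (obtained from `s` by deleting largest elements until the sum is
at most `(3/4)·n`, minimally so) to that of the original multiset `s`. -/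
theorem stmt_4 (n n' : ℕ) (s s' t : Multiset ℕ)
    (hpos : ∀ a ∈ s, 0 < a)
    (hcard : 2 ≤ Multiset.card s)
    (hsum : s.sum = n)
    (hsplit : s = s' + t)
    (ht : t ≠ 0)
    (hge : ∀ a ∈ t, ∀ b ∈ s', b ≤ a)
    (hn' : s'.sum = n')
    (hn'le : (n' : ℝ) ≤ (3 / 4) * n)
    (hminimal : ∀ a ∈ t, (3 / 4 : ℝ) * n < (n' : ℝ) + a) :
    min ((n' : ℝ) / 8)
      ((1 / 32) * sInf {y : ℝ | ∃ L : ℕ, 1 ≤ L ∧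
        (s'.filter (fun a => a < L)).sum < n' ∧
        y = (((s'.filter (fun a => a < L)).sum : ℝ) +
              ((s'.filter (fun a => L ≤ a)).card : ℝ)) *
            max 1 (Real.logb 2 (((s'.filter (fun a => L ≤ a)).card : ℝ)))})
    ≥ (1 / 1000) * min (n : ℝ)
      (sInf {y : ℝ | ∃ L : ℕ, 1 ≤ L ∧
        (((s.filter (fun a => a < L)).sum : ℝ)) < (n : ℝ) / 2 ∧
        y = (((s.filter (fun a => a < L)).sum : ℝ) +
              ((s.filter (fun a => L ≤ a)).card : ℝ)) *
            max 1 (Real.logb 2 (((s.filter (fun a => L ≤ a)).card : ℝ)))}) := by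
  subst hsplit hsum hn'
  have htrim : IsMinimalTrim s' t :=
    ⟨hge, fun a ha => by
      have h4 : (3 * (s' + t).sum : ℝ) < 4 * (s'.sum + a) := by linarith [hminimal a ha]
      exact_mod_cast h4⟩
  have hs' : 0 < s'.sum := by
    obtain ⟨b, hb⟩ := Multiset.exists_mem_of_ne_zero (htrim.left_ne_zero hcard)
    exact (hpos b (Multiset.mem_add.2 (Or.inl hb))).trans_le (Multiset.le_sum_of_mem hb)
  have hsum := htrim.blockSortingBound_le_three_mul_sum hs'
  have hcost : blockSortingBound (s' + t) / 12 ≤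
      minThresholdCost s' fun L => smallMass s' L < s'.sum :=
    le_minThresholdCost ⟨1, le_rfl, by rwa [smallMass_one]⟩ fun L hL hlt => by
      linarith [htrim.blockSortingBound_le_twelve_mul_thresholdCost hL hlt]
  have hcost_nonneg := minThresholdCost_nonneg s' fun L => smallMass s' L < s'.sum
  change 1 / 1000 * blockSortingBound (s' + t) ≤ min ((s'.sum : ℝ) / 8)
    (1 / 32 * minThresholdCost s' fun L => smallMass s' L < s'.sum)
  exact le_min (by linarith) (by linarith)
end

section
/- Let n ≥ 1, let V be a type, let v : Fin n → V, and let L ≥ 1 be an integer. Let C(L) be the number of indices x ∈ Fin n whose value v(x) is attained by fewer than L indices, and let D(L) be the number of values w ∈ V attained by at least L indices. Suppose D(L) ≥ 1. If S₁, …, S_t are pairwise disjoint subsets of Fin n, each of size exactly 2·D(L), and v is injective on each S_i, then t·D(L) ≤ C(L). -/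
/-!
Call a value large if at least `L` indices attain it. A block on which `v` is injective contains at
most one index per large value, hence at most `D` indices from large clusters, and the indices from
small clusters in disjoint blocks are counted by `C` without repetition. Summing over the blocks
bounds their total size by `C + t * D`; for blocks of size `2 * D` this is `t * D ≤ C`.
-/

section InjectiveBlocks

open Finset

variable {α ι V : Type*} [DecidableEq V]

theorem card_le_card_filter_notMem_add_card_of_injOn {v : α → V} {s : Finset α}
    (hinj : Set.InjOn v s) (W : Finset V) : #s ≤ #{x ∈ s | v x ∉ W} + #W := by
  have card_mem_le : #{x ∈ s | v x ∈ W} ≤ #W :=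
    card_le_card_of_injOn v (fun _ hx => (mem_filter.mp hx).2)
      (hinj.mono (filter_subset _ s))
  have card_split := card_filter_add_card_filter_not (s := s) (v · ∈ W)
  lia

theorem sum_card_filter_le_card_filter_univ_of_pairwiseDisjoint [Fintype α] {I : Finset ι}
    {S : ι → Finset α} (hdisj : (I : Set ι).PairwiseDisjoint S) (p : α → Prop)
    [DecidablePred p] : ∑ i ∈ I, #{x ∈ S i | p x} ≤ #{x | p x} := by
  have hdisj_filter : (I : Set ι).PairwiseDisjoint fun i => {x ∈ S i | p x} :=
    hdisj.mono fun i => filter_subset p (S i)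
  rw [← card_disjiUnion I _ hdisj_filter]
  refine card_le_card fun x hx => ?_
  obtain ⟨i, -, hxi⟩ := mem_disjiUnion.mp hx
  exact filter_subset_filter p (subset_univ (S i)) hxi

theorem stmt_7_general [Fintype α] (v : α → V) (W : Finset V) {I : Finset ι}
    {S : ι → Finset α} (hdisj : (I : Set ι).PairwiseDisjoint S)
    (hinj : ∀ i ∈ I, Set.InjOn v (S i)) :
    ∑ i ∈ I, #(S i) ≤ #{x | v x ∉ W} + #I * #W :=
  calc ∑ i ∈ I, #(S i)
    _ ≤ ∑ i ∈ I, (#{x ∈ S i | v x ∉ W} + #W) :=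
        sum_le_sum fun i hi => card_le_card_filter_notMem_add_card_of_injOn (hinj i hi) W
    _ = ∑ i ∈ I, #{x ∈ S i | v x ∉ W} + #I * #W := by
        rw [sum_add_distrib, sum_const, smul_eq_mul]
    _ ≤ #{x | v x ∉ W} + #I * #W := by
        gcongr
        exact sum_card_filter_le_card_filter_univ_of_pairwiseDisjoint hdisj (v · ∉ W)

/-- The values whose cluster (fiber of `v`) has at least `L` elements; `D(L)` is its cardinality.
Only values in the range of `v` are considered, so for `L = 0` it is that range. -/
def largeValues [Fintype α] (v : α → V) (L : ℕ) : Finset V :=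
  {w ∈ univ.image v | L ≤ #{y | v y = w}}

theorem apply_notMem_largeValues_iff [Fintype α] {v : α → V} {L : ℕ} {x : α} :
    v x ∉ largeValues v L ↔ #{y | v y = v x} < L := by
  simp [largeValues]

end InjectiveBlocks

/-- Counting argument in Lemma 1 (Block Sorting): each duplicate-free block of size
`2·D(L)` contains at least `D(L)` elements from clusters of size `< L`, so `t` disjoint
such blocks force `t·D(L) ≤ C(L)`. -/
theorem stmt_7 (n : ℕ) (hn : 1 ≤ n) (V : Type*) [DecidableEq V] (v : Fin n → V)
    (L : ℕ) (hL : 1 ≤ L) (t : ℕ)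
    (C D : ℕ)
    (hC : C = (Finset.univ.filter (fun x : Fin n =>
      (Finset.univ.filter (fun y : Fin n => v y = v x)).card < L)).card)
    (hD : D = ((Finset.univ.image v).filter (fun w =>
      L ≤ (Finset.univ.filter (fun y : Fin n => v y = w)).card)).card)
    (hD1 : 1 ≤ D)
    (S : Fin t → Finset (Fin n))
    (hdisj : ∀ i j, i ≠ j → Disjoint (S i) (S j))
    (hcard : ∀ i, (S i).card = 2 * D)
    (hinj : ∀ i, Set.InjOn v (S i)) :
    t * D ≤ C := by
  have total_le := stmt_7_general v (largeValues v L) (I := Finset.univ) (S := S)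
    (fun i _ j _ hij => hdisj i j hij) (fun i _ => hinj i)
  have card_large : (largeValues v L).card = D := hD.symm
  simp only [apply_notMem_largeValues_iff, ← hC, card_large, hcard, Finset.sum_const,
    Finset.card_univ, Fintype.card_fin, smul_eq_mul] at total_le
  linarith
end

section
/- Let n ≥ 1, let V be a type, let v : Fin n → V, and let L ≥ 1 be an integer. Let C(L) be the number of indices x ∈ Fin n whose value v(x) is attained by fewer than L indices, and let D(L) be the number of values w ∈ V attained by at least L indices. If Fin n can be partitioned into pairwise disjoint sets whose union is Fin n, each of size at least 2·D(L), such that v is injective on each part, then C(L) ≥ n/2. -/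
/-!
The elements whose value lies in a set `W` inject into the pairs (part, value in `W`), since the
parts are duplicate-free; so there are at most `#parts * #W` of them. Disjoint parts of size at
least `2 * #W` satisfy `#parts * (2 * #W) ≤ n`, hence at most half of the elements have their value
in `W`. Apply this to the set `W` of values attained at least `L` times.
-/

open Finset

theorem card_le_card_mul_card_of_cover_of_injOn {ι α β : Type*} {s : Finset ι}
    {P : ι → Finset α} {t : Finset α} {W : Finset β} {v : α → β}
    (hcover : ∀ x ∈ t, ∃ i ∈ s, x ∈ P i) (hinj : ∀ i ∈ s, Set.InjOn v (P i))
    (hW : Set.MapsTo v t W) : #t ≤ #s * #W := by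
  classical
  have hsub : t ⊆ s.biUnion fun i => t ∩ P i := fun x hx => by
    simpa [hx] using hcover x hx
  refine (card_le_card hsub).trans (card_biUnion_le_card_mul s _ _ fun i hi => ?_)
  exact card_le_card_of_injOn v (fun x hx => hW (mem_of_mem_inter_left hx))
    ((hinj i hi).mono (coe_subset.mpr inter_subset_right))

theorem card_mul_le_card_of_pairwiseDisjoint {ι α : Type*} [Fintype α] {s : Finset ι}
    {P : ι → Finset α} {m : ℕ} (hdisj : (s : Set ι).PairwiseDisjoint P)
    (hsize : ∀ i ∈ s, m ≤ #(P i)) : #s * m ≤ Fintype.card α := by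
  classical
  calc #s * m ≤ ∑ i ∈ s, #(P i) := by simpa using card_nsmul_le_sum s _ m hsize
    _ = #(s.biUnion P) := (card_biUnion hdisj).symm
    _ ≤ Fintype.card α := card_le_univ _

theorem stmt_8_general {ι α V : Type*} [Fintype α] [DecidableEq V] {v : α → V} {W : Finset V}
    {s : Finset ι} {P : ι → Finset α} (hdisj : (s : Set ι).PairwiseDisjoint P)
    (hcover : ∀ x, ∃ i ∈ s, x ∈ P i) (hsize : ∀ i ∈ s, 2 * #W ≤ #(P i))
    (hinj : ∀ i ∈ s, Set.InjOn v (P i)) :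
    (Fintype.card α : ℝ) / 2 ≤ #{x | v x ∉ W} := by
  have hmem : #{x | v x ∈ W} ≤ #s * #W :=
    card_le_card_mul_card_of_cover_of_injOn (fun x _ => hcover x) hinj fun x hx => by
      simpa using hx
  have hparts : #s * (2 * #W) ≤ Fintype.card α :=
    card_mul_le_card_of_pairwiseDisjoint hdisj hsize
  have hsplit : #{x | v x ∈ W} + #{x | v x ∉ W} = Fintype.card α :=
    card_filter_add_card_filter_not _
  have hhalf : Fintype.card α ≤ #{x | v x ∉ W} * 2 := by linarith
  rw [div_le_iff₀ two_pos]
  exact_mod_cast hhalf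

/-- The 'give up' argument in Lemma 1 (Block Sorting): if `Fin n` can be partitioned
into duplicate-free parts of size at least `2·D(L)`, then `C(L) ≥ n/2`. -/
theorem stmt_8 (n : ℕ) (hn : 1 ≤ n) (V : Type*) [DecidableEq V] (v : Fin n → V)
    (L : ℕ) (hL : 1 ≤ L)
    (C D : ℕ)
    (hC : C = (Finset.univ.filter (fun x : Fin n =>
      (Finset.univ.filter (fun y : Fin n => v y = v x)).card < L)).card)
    (hD : D = ((Finset.univ.image v).filter (fun w =>
      L ≤ (Finset.univ.filter (fun y : Fin n => v y = w)).card)).card)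
    (parts : Finset (Finset (Fin n)))
    (hdisj : (parts : Set (Finset (Fin n))).PairwiseDisjoint id)
    (hcover : ∀ x : Fin n, ∃ P ∈ parts, x ∈ P)
    (hsize : ∀ P ∈ parts, 2 * D ≤ P.card)
    (hinj : ∀ P ∈ parts, Set.InjOn v ↑P) :
    (n : ℝ) / 2 ≤ (C : ℝ) := by
  subst hC hD
  simpa using stmt_8_general hdisj hcover hsize hinj
end

section
/- Let C₀, L₀, C, L be real numbers with 2 ≤ L₀ ≤ C₀, C₀ ≤ C ≤ 2·C₀, and L₀²/C₀ ≤ L ≤ L₀. Then C·log₂(C/L) ≤ 2·C₀·(1 + 2·log₂(C₀/L₀)). -/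
/-!
The bounds `C ≤ k * C₀` and `L₀ ^ 2 / C₀ ≤ L` replace the ratio `C₀ / L₀` by at most `k` times its
square, so passing from `C₀ / L₀` to `C / L` at most doubles the logarithm, up to an additive
`log k`.
-/

theorem div_le_mul_div_sq {K : Type*} [Field K] [LinearOrder K] [IsStrictOrderedRing K]
    {k C₀ L₀ C L : K} (hk : 0 ≤ k) (hC₀ : 0 < C₀) (hL₀ : L₀ ≠ 0)
    (hC_le : C ≤ k * C₀) (hL_ge : L₀ ^ 2 / C₀ ≤ L) :
    C / L ≤ k * (C₀ / L₀) ^ 2 :=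
  calc C / L ≤ k * C₀ / (L₀ ^ 2 / C₀) := by gcongr
    _ = k * (C₀ / L₀) ^ 2 := by field_simp

theorem logb_div_le_logb_add_two_mul_logb_div {b k C₀ L₀ C L : ℝ} (hb : 1 < b)
    (hC₀ : 0 < C₀) (hL₀ : 0 < L₀) (hC : 0 < C) (hC_le : C ≤ k * C₀) (hL_ge : L₀ ^ 2 / C₀ ≤ L) :
    Real.logb b (C / L) ≤ Real.logb b k + 2 * Real.logb b (C₀ / L₀) := by
  have hk : 0 < k := (pos_iff_pos_of_mul_pos (hC.trans_le hC_le)).2 hC₀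
  have hL : 0 < L := lt_of_lt_of_le (by positivity) hL_ge
  calc Real.logb b (C / L) ≤ Real.logb b (k * (C₀ / L₀) ^ 2) :=
        Real.logb_le_logb_of_le hb (by positivity)
          (div_le_mul_div_sq hk.le hC₀ hL₀.ne' hC_le hL_ge)
    _ = Real.logb b k + 2 * Real.logb b (C₀ / L₀) := by
        rw [Real.logb_mul hk.ne' (by positivity), Real.logb_pow, Nat.cast_ofNat]

theorem stmt_10_general {b k C₀ L₀ C L : ℝ} (hb : 1 < b) (hk : 1 ≤ k)
    (hL₀ : 0 < L₀) (hL₀_le : L₀ ≤ C₀) (hC : 0 < C) (hC_le : C ≤ k * C₀)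
    (hL_ge : L₀ ^ 2 / C₀ ≤ L) :
    C * Real.logb b (C / L) ≤ k * C₀ * (Real.logb b k + 2 * Real.logb b (C₀ / L₀)) := by
  have hC₀ : 0 < C₀ := hL₀.trans_le hL₀_le
  have logb_k_nonneg : 0 ≤ Real.logb b k := Real.logb_nonneg hb hk
  have logb_ratio_nonneg : 0 ≤ Real.logb b (C₀ / L₀) :=
    Real.logb_nonneg hb ((one_le_div hL₀).2 hL₀_le)
  calc C * Real.logb b (C / L) ≤ C * (Real.logb b k + 2 * Real.logb b (C₀ / L₀)) := by
        gcongr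
        exact logb_div_le_logb_add_two_mul_logb_div hb hC₀ hL₀ hC hC_le hL_ge
    _ ≤ k * C₀ * (Real.logb b k + 2 * Real.logb b (C₀ / L₀)) := by gcongr

/-- Key inequality for Oblivious Median Recursion (Claim 5). -/
theorem stmt_10 (C₀ L₀ C L : ℝ) (h1 : 2 ≤ L₀) (h2 : L₀ ≤ C₀)
    (h3 : C₀ ≤ C) (h4 : C ≤ 2 * C₀) (h5 : L₀ ^ 2 / C₀ ≤ L) (h6 : L ≤ L₀) :
    C * Real.logb 2 (C / L) ≤ 2 * C₀ * (1 + 2 * Real.logb 2 (C₀ / L₀)) := by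
  simpa only [Real.logb_self_eq_one one_lt_two] using
    stmt_10_general one_lt_two one_le_two (by linarith) h2 (by linarith) h4 h5
end
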